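/- arXiv:2402.00848 — 2 statements merged into one kernel-verified Lean document; each statement's English description precedes it below -/
import Mathlib

section
/- Let m, v, N ∈ ℕ with 2v ≤ N, let Ω be a compact subset of ℝ^d with a Borel probability measure μ, let 1 ≤ p < ∞, and let D_N = {g_1,…,g_N} ⊂ C(Ω) be a system of N functions. For each J ⊆ {1,…,N} put X_J := span{g_i : i ∈ J}, and let Σ_k(D_N) be the union of X_J over all J with |J| = k. Assume points ξ^1,…,ξ^m ∈ Ω are such that ‖u‖_p ≤ D max_{1≤j≤m}|u(ξ^j)| for every u ∈ Σ_{2v}(D_N). Then for every f ∈ C(Ω) and every u ∈ Σ_v(D_N) satisfying max_{1≤j≤m}|f(ξ^j) − u(ξ^j)| ≤ max_{1≤j≤m}|f(ξ^j) − g(ξ^j)| for all g ∈ Σ_v(D_N), one has ‖f − u‖_p ≤ (2D + 1) σ_v(f, D_N)_∞. -/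
open MeasureTheory

/-- The `L_p(μ)`-norm of a function `f`, `(∫ |f|^p dμ)^(1/p)`. -/
noncomputable def LpNorm {Ω : Type*} [MeasurableSpace Ω] (μ : Measure Ω) (p : ℝ)
    (f : Ω → ℝ) : ℝ :=
  (∫ ω, |f ω| ^ p ∂μ) ^ (1 / p)

/-- The uniform norm `sup_ω |f ω|`. -/
noncomputable def supNorm {Ω : Type*} (f : Ω → ℝ) : ℝ :=
  ⨆ ω, |f ω|

/-- `Σ_k(D_N)`: the set of `k`-term approximants with respect to the system `g`. -/
def sigmaSet {Ω : Type*} [TopologicalSpace Ω] {N : ℕ} (k : ℕ) (g : Fin N → C(Ω, ℝ)) :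
    Set C(Ω, ℝ) :=
  {u | ∃ J : Finset (Fin N), J.card = k ∧ u ∈ Submodule.span ℝ (g '' ↑J)}

/-- `σ_v(f, D_N)_∞`: the best `v`-term approximation of `f` in the uniform norm. -/
noncomputable def bestVTerm {Ω : Type*} [TopologicalSpace Ω] {N : ℕ}
    (v : ℕ) (g : Fin N → C(Ω, ℝ)) (f : C(Ω, ℝ)) : ℝ :=
  ⨅ h : sigmaSet v g, supNorm (fun ω => f ω - (h : C(Ω, ℝ)) ω)

theorem LpNorm_eq_aux {Ω : Type*} [MeasurableSpace Ω] (μ : Measure Ω) (p : ℝ) (hp : 1 ≤ p)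
    (f : Ω → ℝ) (hf : MemLp f (ENNReal.ofReal p) μ) :
    LpNorm μ p f = (eLpNorm f (ENNReal.ofReal p) μ).toReal := by
  have h0 : 0 < p := by linarith
  rw [hf.eLpNorm_eq_integral_rpow_norm (by simpa using h0) ENNReal.ofReal_ne_top]
  rw [ENNReal.toReal_ofReal (by positivity), ENNReal.toReal_ofReal h0.le]
  simp [LpNorm, one_div]

theorem sigma_sub_aux {Ω : Type*} [TopologicalSpace Ω] {N : ℕ} (v : ℕ) (hvN : 2 * v ≤ N)
    (g : Fin N → C(Ω, ℝ)) (a b : C(Ω, ℝ)) (ha : a ∈ sigmaSet v g) (hb : b ∈ sigmaSet v g) :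
    a - b ∈ sigmaSet (2 * v) g := by
  classical
  obtain ⟨J, hJ, haJ⟩ := ha
  obtain ⟨K, hK, hbK⟩ := hb
  have hc : (J ∪ K).card ≤ 2 * v := by
    have := Finset.card_union_le J K
    omega
  obtain ⟨L, hL, hLc⟩ := Finset.exists_superset_card_eq hc (by simpa using hvN)
  refine ⟨L, hLc, Submodule.sub_mem _ ?_ ?_⟩
  · refine Submodule.span_mono (Set.image_mono ?_) haJ
    exact_mod_cast Finset.subset_union_left.trans hL
  · refine Submodule.span_mono (Set.image_mono ?_) hbK
    exact_mod_cast Finset.subset_union_right.trans hL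

/-- Theorem 6.2: under the universal LDI(p,∞) for the collection `X_{2v}(D_N)`,
any `u ∈ Σ_v(D_N)` minimizing the discrete uniform distance `max_j |f(ξ^j) - g(ξ^j)|` over
`Σ_v(D_N)` satisfies `‖f - u‖_p ≤ (2D + 1) σ_v(f, D_N)_∞`. -/
theorem stmt_16 (dd : ℕ) (Ω : Set (Fin dd → ℝ)) (hΩ : IsCompact Ω)
    (μ : Measure Ω) [IsProbabilityMeasure μ]
    (p : ℝ) (hp : 1 ≤ p)
    (m v N : ℕ) (hvN : 2 * v ≤ N)
    (g : Fin N → C(Ω, ℝ))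
    (ξ : Fin m → Ω) (D : ℝ) (hD : 0 < D)
    (hLDI : ∀ u ∈ sigmaSet (2 * v) g, LpNorm μ p ⇑u ≤ D * ⨆ j, |u (ξ j)|)
    (f : C(Ω, ℝ)) (u : C(Ω, ℝ)) (hu_mem : u ∈ sigmaSet v g)
    (hu_min : ∀ h ∈ sigmaSet v g,
      (⨆ j, |f (ξ j) - u (ξ j)|) ≤ ⨆ j, |f (ξ j) - h (ξ j)|) :
    LpNorm μ p (fun ω => f ω - u ω) ≤ (2 * D + 1) * bestVTerm v g f := by
  haveI : CompactSpace Ω := isCompact_iff_compactSpace.mp hΩ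
  have hne : Nonempty Ω := μ.nonempty_of_neZero
  have h0 : 0 < p := by linarith
  have hP : (1 : ENNReal) ≤ ENNReal.ofReal p := by simpa using hp
  have hmem : ∀ k : C(Ω, ℝ), MemLp (⇑k) (ENNReal.ofReal p) μ := fun k =>
    MemLp.of_bound k.continuous.aestronglyMeasurable ‖k‖
      (Filter.Eventually.of_forall fun x => k.norm_coe_le_norm x)
  have hbdd : ∀ k : C(Ω, ℝ), BddAbove (Set.range fun ω => |k ω|) := fun k =>
    ⟨‖k‖, by rintro _ ⟨x, rfl⟩; exact k.norm_coe_le_norm x⟩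
  have : Nonempty (sigmaSet v g) := ⟨⟨u, hu_mem⟩⟩
  unfold bestVTerm
  rw [Real.mul_iInf_of_nonneg (by positivity)]
  refine le_ciInf ?_
  rintro ⟨h, hh⟩
  set S := supNorm (fun ω => f ω - h ω) with hS
  have hle : ∀ ω, |f ω - h ω| ≤ S := fun ω => le_ciSup (hbdd (f - h)) ω
  have hS0 : 0 ≤ S := (abs_nonneg _).trans (hle hne.some)
  have hfh : (⨆ j, |f (ξ j) - h (ξ j)|) ≤ S := Real.iSup_le (fun j => hle _) hS0
  have hfu : ∀ j, |f (ξ j) - u (ξ j)| ≤ S := fun j =>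
    (le_ciSup (f := fun j => |f (ξ j) - u (ξ j)|) (Set.finite_range _).bddAbove j).trans
      ((hu_min h hh).trans hfh)
  have hD2 : (⨆ j, |(h - u) (ξ j)|) ≤ 2 * S := by
    refine Real.iSup_le (fun j => ?_) (by positivity)
    have h1 := abs_le.mp (hfu j)
    have h2 := abs_le.mp (hle (ξ j))
    rw [ContinuousMap.sub_apply, abs_le]
    constructor <;> linarith
  have hA : LpNorm μ p ⇑(h - u) ≤ D * (2 * S) :=
    (hLDI _ (sigma_sub_aux v hvN g h u hh hu_mem)).trans (by gcongr)
  have hB : LpNorm μ p ⇑(f - h) ≤ S := by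
    rw [LpNorm_eq_aux μ p hp _ (hmem _)]
    refine ENNReal.toReal_le_of_le_ofReal hS0 ?_
    have := eLpNorm_le_of_ae_bound (μ := μ) (p := ENNReal.ofReal p) (f := ⇑(f - h)) (C := S)
      (Filter.Eventually.of_forall hle)
    simpa using this
  have hT : LpNorm μ p ⇑(f - u) ≤ LpNorm μ p ⇑(f - h) + LpNorm μ p ⇑(h - u) := by
    rw [LpNorm_eq_aux μ p hp _ (hmem _), LpNorm_eq_aux μ p hp _ (hmem _),
      LpNorm_eq_aux μ p hp _ (hmem _),
      ← ENNReal.toReal_add (hmem _).eLpNorm_ne_top (hmem _).eLpNorm_ne_top]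
    refine ENNReal.toReal_mono
      (ENNReal.add_ne_top.2 ⟨(hmem _).eLpNorm_ne_top, (hmem _).eLpNorm_ne_top⟩) ?_
    have := eLpNorm_add_le (hmem (f - h)).1 (hmem (h - u)).1 hP
    have e : (⇑(f - u) : Ω → ℝ) = ⇑(f - h) + ⇑(h - u) := by
      ext x; simp
    rw [e]; exact this
  change LpNorm μ p ⇑(f - u) ≤ (2 * D + 1) * S
  linarith
end

section
/- Let m, v, N ∈ ℕ with 2v ≤ N, let Ω be a compact subset of ℝ^d with a Borel probability measure μ, let 1 ≤ p < ∞, and let D_N = {g_1,…,g_N} ⊂ C(Ω) be a system of N functions. For each J ⊆ {1,…,N} put X_J := span{g_i : i ∈ J}, and let Σ_k(D_N) be the union of X_J over all J with |J| = k. Assume points ξ^1,…,ξ^m ∈ Ω are such that ‖u‖_p ≤ D max_{1≤j≤m}|u(ξ^j)| for every u ∈ Σ_{2v}(D_N). Then there exists a map Ψ : ℝ^m → L_p(Ω,μ), taking values in Σ_v(D_N), such that for every f ∈ C(Ω) one has ‖f − Ψ(f(ξ^1),…,f(ξ^m))‖_p ≤ (2D + 1) σ_v(f, D_N)_∞; in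 particular, for every compact subset F of C(Ω), the optimal sampling recovery quantity ρ_m^o(F, L_p(Ω,μ)) := inf over point sets ζ^1,…,ζ^m ∈ Ω and maps Φ : ℝ^m → L_p(Ω,μ) of sup_{f∈F}‖f − Φ(f(ζ^1),…,f(ζ^m))‖_p satisfies ρ_m^o(F, L_p(Ω,μ)) ≤ (2D + 1) σ_v(F, D_N)_∞. -/
open MeasureTheory

/-- The optimal sampling recovery quantity `ρ_m^o(F, L_p(Ω,μ))`: the infimum over point sets
`ζ^1,…,ζ^m` and recovery maps `Φ : ℝ^m → L_p(Ω,μ)` of `sup_{f ∈ F} ‖f - Φ(f(ζ))‖_p`. -/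
noncomputable def rhoOpt {Ω : Type*} [TopologicalSpace Ω] [MeasurableSpace Ω]
    (μ : Measure Ω) (p : ℝ) (m : ℕ) (F : Set C(Ω, ℝ)) : ℝ :=
  ⨅ (ζ : Fin m → Ω) (Φ : (Fin m → ℝ) → Ω → ℝ),
    ⨆ f : F, LpNorm μ p (fun ω => (f : C(Ω, ℝ)) ω - Φ (fun j => (f : C(Ω, ℝ)) (ζ j)) ω)


open Classical in
lemma aux_min {Ω : Type*} [TopologicalSpace Ω] {N m v : ℕ} (hv : v ≤ N)
    (g : Fin N → C(Ω, ℝ)) (ξ : Fin m → Ω) (y : Fin m → ℝ) :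
    ∃ h ∈ sigmaSet v g, ∀ h' ∈ sigmaSet v g,
      ‖y - (fun j => h (ξ j))‖ ≤ ‖y - (fun j => h' (ξ j))‖ := by
  let S : C(Ω, ℝ) →ₗ[ℝ] (Fin m → ℝ) :=
    { toFun := fun u j => u (ξ j)
      map_add' := fun a b => by ext j; simp
      map_smul' := fun a b => by ext j; simp }
  have key : ∀ J : Finset (Fin N), ∃ h ∈ Submodule.span ℝ (g '' (J : Set (Fin N))),
      ∀ h' ∈ Submodule.span ℝ (g '' (J : Set (Fin N))), ‖y - S h‖ ≤ ‖y - S h'‖ := by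
    intro J
    have hc : IsClosed (((Submodule.span ℝ (g '' (J : Set (Fin N)))).map S : Submodule ℝ _) :
        Set (Fin m → ℝ)) := Submodule.closed_of_finiteDimensional _
    obtain ⟨z, hz, hz'⟩ := hc.exists_infDist_eq_dist ⟨0, Submodule.zero_mem _⟩ y
    obtain ⟨h, hh, rfl⟩ := hz
    refine ⟨h, hh, fun h' hh' => ?_⟩
    rw [← dist_eq_norm, ← dist_eq_norm, ← hz']
    exact Metric.infDist_le_dist_of_mem ⟨h', hh', rfl⟩
  choose H hH hmin using key
  obtain ⟨J₀, hJ₀⟩ : ∃ J : Finset (Fin N), J.card = v := by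
    obtain ⟨J, -, hJ⟩ := Finset.exists_subset_card_eq
      (s := (Finset.univ : Finset (Fin N))) (n := v) (by simpa using hv)
    exact ⟨J, hJ⟩
  obtain ⟨J, hJ, hJm⟩ := Finset.exists_min_image
    ((Finset.univ : Finset (Finset (Fin N))).filter (fun J => J.card = v))
    (fun J => ‖y - S (H J)‖) ⟨J₀, by simp [hJ₀]⟩
  refine ⟨H J, ⟨J, by simpa using hJ, hH J⟩, ?_⟩
  rintro h' ⟨J', hJ', hh'⟩
  exact (hJm J' (by simp [hJ'])).trans (hmin J' h' hh')

lemma aux_sub {Ω : Type*} [TopologicalSpace Ω] {N v : ℕ} (hv : 2 * v ≤ N)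
    (g : Fin N → C(Ω, ℝ)) (a b : C(Ω, ℝ)) (ha : a ∈ sigmaSet v g) (hb : b ∈ sigmaSet v g) :
    a - b ∈ sigmaSet (2 * v) g := by
  classical
  obtain ⟨J, hJ, ha⟩ := ha
  obtain ⟨K, hK, hb⟩ := hb
  obtain ⟨L, hL, hL'⟩ := Finset.exists_superset_card_eq (s := J ∪ K) (n := 2 * v)
    ((Finset.card_union_le _ _).trans (by omega)) (by simpa using hv)
  refine ⟨L, hL', Submodule.sub_mem _ ?_ ?_⟩
  · exact Submodule.span_mono (Set.image_mono (by
      exact_mod_cast Finset.subset_union_left.trans hL)) ha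
  · exact Submodule.span_mono (Set.image_mono (by
      exact_mod_cast Finset.subset_union_right.trans hL)) hb


lemma aux_mem {Ω : Type*} [TopologicalSpace Ω] [CompactSpace Ω] [MeasurableSpace Ω]
    [BorelSpace Ω] (μ : Measure Ω) [IsProbabilityMeasure μ] (q : ENNReal) (f : C(Ω, ℝ)) :
    MemLp (⇑f) q μ :=
  MemLp.of_bound f.continuous.measurable.aestronglyMeasurable ‖f‖
    (Filter.Eventually.of_forall fun x => f.norm_coe_le_norm x)

lemma aux_eq {Ω : Type*} [TopologicalSpace Ω] [CompactSpace Ω] [MeasurableSpace Ω]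
    [BorelSpace Ω] (μ : Measure Ω) [IsProbabilityMeasure μ] (p : ℝ) (hp : 1 ≤ p)
    (f : C(Ω, ℝ)) : LpNorm μ p f = (eLpNorm f (ENNReal.ofReal p) μ).toReal := by
  have h0 : 0 ≤ p := by linarith
  rw [MemLp.eLpNorm_eq_integral_rpow_norm (by simp; linarith) (by simp) (aux_mem μ _ f),
    ENNReal.toReal_ofReal (by positivity), ENNReal.toReal_ofReal h0]
  simp [LpNorm]

lemma aux_add {Ω : Type*} [TopologicalSpace Ω] [CompactSpace Ω] [MeasurableSpace Ω]
    [BorelSpace Ω] (μ : Measure Ω) [IsProbabilityMeasure μ] (p : ℝ) (hp : 1 ≤ p)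
    (f g : C(Ω, ℝ)) : LpNorm μ p (f + g : C(Ω, ℝ)) ≤ LpNorm μ p f + LpNorm μ p g := by
  rw [aux_eq μ p hp, aux_eq μ p hp, aux_eq μ p hp,
    ← ENNReal.toReal_add (aux_mem μ _ f).eLpNorm_ne_top (aux_mem μ _ g).eLpNorm_ne_top]
  refine ENNReal.toReal_mono (ENNReal.add_ne_top.2
    ⟨(aux_mem μ _ f).eLpNorm_ne_top, (aux_mem μ _ g).eLpNorm_ne_top⟩) ?_
  rw [ContinuousMap.coe_add]
  exact eLpNorm_add_le (aux_mem μ 1 f).1 (aux_mem μ 1 g).1 (by simpa using hp)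

lemma aux_le {Ω : Type*} [TopologicalSpace Ω] [CompactSpace Ω] [MeasurableSpace Ω]
    [BorelSpace Ω] (μ : Measure Ω) [IsProbabilityMeasure μ] (p : ℝ) (hp : 1 ≤ p)
    (f : C(Ω, ℝ)) : LpNorm μ p f ≤ ‖f‖ := by
  rw [aux_eq μ p hp]
  refine ENNReal.toReal_le_of_le_ofReal (norm_nonneg _) ?_
  refine (eLpNorm_le_of_ae_bound (C := ‖f‖)
    (Filter.Eventually.of_forall fun x => f.norm_coe_le_norm x)).trans ?_
  simp

lemma aux_sup {Ω : Type*} [TopologicalSpace Ω] [CompactSpace Ω] (f h : C(Ω, ℝ)) :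
    supNorm (fun ω => f ω - h ω) = ‖f - h‖ := by
  rw [ContinuousMap.norm_eq_iSup_norm]
  simp [supNorm]

lemma aux_nonneg {Ω : Type*} [MeasurableSpace Ω] (μ : Measure Ω) (p : ℝ) (f : Ω → ℝ) :
    0 ≤ LpNorm μ p f := by
  unfold LpNorm
  exact Real.rpow_nonneg (integral_nonneg fun x => Real.rpow_nonneg (abs_nonneg _) _) _

/-- Theorem 6.3: under the universal LDI(p,∞) for `X_{2v}(D_N)`, there is a
recovery map `Ψ : ℝ^m → Σ_v(D_N)` using only the samples `f(ξ^j)` with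
`‖f - Ψ(S(f,ξ))‖_p ≤ (2D+1) σ_v(f,D_N)_∞` for all `f ∈ C(Ω)`; in particular, for every
compact `F ⊂ C(Ω)` one has `ρ_m^o(F, L_p(Ω,μ)) ≤ (2D+1) σ_v(F, D_N)_∞`. -/
theorem stmt_17 (dd : ℕ) (Ω : Set (Fin dd → ℝ)) (hΩ : IsCompact Ω)
    (μ : Measure Ω) [IsProbabilityMeasure μ]
    (p : ℝ) (hp : 1 ≤ p)
    (m v N : ℕ) (hvN : 2 * v ≤ N)
    (g : Fin N → C(Ω, ℝ))
    (ξ : Fin m → Ω) (D : ℝ) (hD : 0 < D)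
    (hLDI : ∀ u ∈ sigmaSet (2 * v) g, LpNorm μ p ⇑u ≤ D * ⨆ j, |u (ξ j)|) :
    ∃ Ψ : (Fin m → ℝ) → C(Ω, ℝ),
      (∀ y, Ψ y ∈ sigmaSet v g) ∧
      (∀ f : C(Ω, ℝ),
        LpNorm μ p (fun ω => f ω - Ψ (fun j => f (ξ j)) ω)
          ≤ (2 * D + 1) * bestVTerm v g f) ∧
      (∀ F : Set C(Ω, ℝ), IsCompact F →
        (∀ f ∈ F,
          LpNorm μ p (fun ω => f ω - Ψ (fun j => f (ξ j)) ω)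
            ≤ (2 * D + 1) * ⨆ h : F, bestVTerm v g (h : C(Ω, ℝ))) ∧
        rhoOpt μ p m F ≤ (2 * D + 1) * ⨆ h : F, bestVTerm v g (h : C(Ω, ℝ))) := by
  have : CompactSpace Ω := isCompact_iff_compactSpace.1 hΩ
  have hv : v ≤ N := by omega
  choose Ψ hΨ hmin using fun y => aux_min (m := m) hv g ξ y
  have hsne : Nonempty (sigmaSet v g) := ⟨⟨Ψ 0, hΨ 0⟩⟩
  have hmain : ∀ f : C(Ω, ℝ),
        LpNorm μ p (fun ω => f ω - Ψ (fun j => f (ξ j)) ω)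
          ≤ (2 * D + 1) * bestVTerm v g f := by
    intro f
    unfold bestVTerm
    rw [Real.mul_iInf_of_nonneg (by linarith)]
    refine le_ciInf ?_
    rintro ⟨h, hh⟩
    simp only
    rw [aux_sup]
    set w := Ψ (fun j => f (ξ j)) with hw
    have h1 : LpNorm μ p (fun ω => f ω - w ω) ≤ LpNorm μ p (f - h : C(Ω, ℝ))
        + LpNorm μ p (h - w : C(Ω, ℝ)) := by
      have := aux_add μ p hp (f - h) (h - w)
      rwa [sub_add_sub_cancel] at this
    have h2 := aux_le μ p hp (f - h)
    have h3 := hLDI _ (aux_sub hvN g h w hh (hΨ _))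
    have h4 : ‖(fun j => f (ξ j)) - (fun j => h (ξ j))‖ ≤ ‖f - h‖ := by
      refine (pi_norm_le_iff_of_nonneg (norm_nonneg _)).2 fun j => ?_
      exact (f - h).norm_coe_le_norm (ξ j)
    have h5 := (hmin (fun j => f (ξ j)) h hh).trans h4
    have h6 : ⨆ j, |(h - w) (ξ j)| ≤ 2 * ‖f - h‖ := by
      refine Real.iSup_le (fun j => ?_) (by positivity)
      have a1 := (norm_le_pi_norm _ j).trans h4
      have a2 := (norm_le_pi_norm _ j).trans h5
      simp only [Pi.sub_apply, Real.norm_eq_abs] at a1 a2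
      rw [← hw] at a2
      rw [ContinuousMap.sub_apply]
      rw [abs_le] at *
      constructor <;> linarith [a1.1, a1.2, a2.1, a2.2]
    have h7 := mul_le_mul_of_nonneg_left h6 hD.le
    linarith
  have hb0 : ∀ f : C(Ω, ℝ), 0 ≤ bestVTerm v g f := by
    intro f
    refine Real.iInf_nonneg fun h => ?_
    rw [aux_sup]
    exact norm_nonneg _
  have hb1 : ∀ f : C(Ω, ℝ), bestVTerm v g f ≤ ‖f - Ψ 0‖ := by
    intro f
    rw [← aux_sup]
    refine ciInf_le (f := fun h : sigmaSet v g => supNorm (fun ω => f ω - (h : C(Ω, ℝ)) ω))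
      ⟨0, ?_⟩ ⟨Ψ 0, hΨ 0⟩
    rintro _ ⟨h, rfl⟩
    simp only
    rw [aux_sup]
    exact norm_nonneg _
  refine ⟨Ψ, hΨ, hmain, fun F hF => ?_⟩
  have hF1 : ∀ f ∈ F,
          LpNorm μ p (fun ω => f ω - Ψ (fun j => f (ξ j)) ω)
            ≤ (2 * D + 1) * ⨆ h : F, bestVTerm v g (h : C(Ω, ℝ)) := by
    intro f hf
    refine (hmain f).trans (mul_le_mul_of_nonneg_left ?_ (by linarith))
    refine le_ciSup (f := fun h : F => bestVTerm v g (h : C(Ω, ℝ))) ?_ ⟨f, hf⟩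
    obtain ⟨C, hC⟩ := hF.isBounded.exists_norm_le
    refine ⟨C + ‖Ψ 0‖, ?_⟩
    rintro _ ⟨h, rfl⟩
    exact (hb1 _).trans ((norm_sub_le _ _).trans (by linarith [hC _ h.2]))
  refine ⟨hF1, ?_⟩
  have hn : ∀ (ζ : Fin m → Ω) (Φ : (Fin m → ℝ) → Ω → ℝ), 0 ≤ ⨆ f : F, LpNorm μ p
      (fun ω => (f : C(Ω, ℝ)) ω - Φ (fun j => (f : C(Ω, ℝ)) (ζ j)) ω) :=
    fun ζ Φ => Real.iSup_nonneg fun f => aux_nonneg _ _ _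
  unfold rhoOpt
  refine (ciInf_le ⟨0, ?_⟩ ξ).trans ((ciInf_le ⟨0, ?_⟩ (fun y => ⇑(Ψ y))).trans ?_)
  · rintro _ ⟨ζ, rfl⟩
    exact Real.iInf_nonneg fun Φ => hn ζ Φ
  · rintro _ ⟨Φ, rfl⟩
    exact hn ξ Φ
  · exact Real.iSup_le (fun f => hF1 f f.2)
      (mul_nonneg (by linarith) (Real.iSup_nonneg fun f => hb0 _))
end
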